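/- For d = 5, every sequence of admissible pairs ((pos_0, neg_0), ..., (pos_4, neg_4)) in which (pos_2, neg_2) = (0,1) or (pos_2, neg_2) = (1,0) is realizable (together with the sign pattern it determines). -/

import Mathlib

open Polynomial

/-- Number of sign changes among consecutive entries `s 0, …, s n`. -/
def signChanges (s : ℕ → ℤ) (n : ℕ) : ℕ :=
  ((Finset.range n).filter (fun i => s i * s (i + 1) < 0)).card

/-- Number of sign preservations among consecutive entries `s 0, …, s n`. -/
def signPres (s : ℕ → ℤ) (n : ℕ) : ℕ :=
  ((Finset.range n).filter (fun i => 0 < s i * s (i + 1))).card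

/-- `s` encodes a sign pattern of length `d+1` (entries `s 0, …, s d`, each `±1`,
first entry `+1`). -/
def IsSignPattern (d : ℕ) (s : ℕ → ℤ) : Prop :=
  s 0 = 1 ∧ ∀ i ≤ d, s i = 1 ∨ s i = -1

/-- `pn k = (pos_k, neg_k)`, `k = 0, …, d-1`, is a sequence of admissible pairs (SAP)
for the sign pattern `s` of length `d+1`: each pair is admissible for the truncated
pattern `σ_k` (of length `d+1-k`, with sign changes `signChanges s (d-k)` and sign
preservations `signPres s (d-k)`), the last entry of `σ_k` is `(-1)^{pos_k}`, and the
Rolle-type inequalities and parity condition hold between consecutive pairs. -/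
def IsSAP (d : ℕ) (s : ℕ → ℤ) (pn : ℕ → ℕ × ℕ) : Prop :=
  (∀ k < d,
    (pn k).1 ≤ signChanges s (d - k) ∧
    Even ((signChanges s (d - k) : ℤ) - (pn k).1) ∧
    (pn k).2 ≤ signPres s (d - k) ∧
    Even ((signPres s (d - k) : ℤ) - (pn k).2) ∧
    s (d - k) = (-1) ^ (pn k).1) ∧
  (∀ k, k + 1 < d →
    (pn k).1 ≤ (pn (k + 1)).1 + 1 ∧
    (pn k).2 ≤ (pn (k + 1)).2 + 1 ∧
    (pn k).1 + (pn k).2 ≤ (pn (k + 1)).1 + (pn (k + 1)).2 + 1 ∧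
    Even (((pn (k + 1)).1 : ℤ) + (pn (k + 1)).2 + 3 - (pn k).1 - (pn k).2))

/-- The `k`-th derivative of a real polynomial. -/
noncomputable def iterDeriv : ℕ → Polynomial ℝ → Polynomial ℝ
  | 0, P => P
  | k + 1, P => Polynomial.derivative (iterDeriv k P)

/-- `P` has exactly `pos` positive real roots and exactly `neg` negative real roots,
all of them simple. -/
def CountRoots (P : Polynomial ℝ) (pos neg : ℕ) : Prop :=
  {x : ℝ | 0 < x ∧ P.eval x = 0}.ncard = pos ∧
  {x : ℝ | x < 0 ∧ P.eval x = 0}.ncard = neg ∧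
  ∀ x : ℝ, P.eval x = 0 → (Polynomial.derivative P).eval x ≠ 0

/-- The couple (sign pattern `s`, SAP `pn`) of degree `d` is realizable: there is a
monic real polynomial of degree `d`, with all coefficients nonzero, whose coefficient
signs define the pattern `s` (the sign of the coefficient of `x^(d-i)` is `s i`), and
such that for `k = 0, …, d-1` the `k`-th derivative has exactly `(pn k).1` positive and
`(pn k).2` negative real roots, all simple. -/
def Realizable (d : ℕ) (s : ℕ → ℤ) (pn : ℕ → ℕ × ℕ) : Prop :=
  ∃ P : Polynomial ℝ, P.Monic ∧ P.natDegree = d ∧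
    (∀ j ≤ d, P.coeff j ≠ 0) ∧
    (∀ i ≤ d, 0 < (s i : ℝ) * P.coeff (d - i)) ∧
    ∀ k < d, CountRoots (iterDeriv k P) (pn k).1 (pn k).2

/-!
Build `P` from the top coefficient down. Appending a constant term `c` to `X * q` has a predictable
effect on the real roots when `c` is extreme: if `|c|` is large, a single real root survives in odd
degree and none in even degree (for `c > 0`); if `|c|` is small, all roots of `q` survive and the
root `0` of `X * q` moves to the left or to the right according to the sign of `c`. An extreme
choice of `c` works for finitely many `q` at once. Hence the tails of the coefficient sequences of
`P` and its derivatives, which differ only by positive weights, can be kept at the prescribed root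
counts simultaneously, as long as every pair of the sequence is reached from its successor by one of
these moves. In degree `5` this is automatic once `pos_2 + neg_2 = 1`.
-/

open Filter Topology Set

/-! ### Root counts -/

lemma CountRoots.neg_comp_neg_X {p : ℝ[X]} {a b : ℕ} (h : CountRoots p a b) :
    CountRoots (-p.comp (-X)) b a := by
  obtain ⟨hpos, hneg, hsimple⟩ := h
  refine ⟨?_, ?_, fun x hx ↦ ?_⟩
  · rw [← hneg, ← ncard_image_of_injective _ neg_injective]
    congr 1
    ext x
    simp
  · rw [← hpos, ← ncard_image_of_injective _ neg_injective]
    congr 1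
    ext x
    simp
  · simpa [derivative_comp] using hsimple (-x) (by simpa using hx)

lemma CountRoots.X_mul {q : ℝ[X]} {a b : ℕ} (h : CountRoots q a b) (hq : q.eval 0 ≠ 0) :
    CountRoots (X * q) a b := by
  obtain ⟨hpos, hneg, hsimple⟩ := h
  refine ⟨?_, ?_, fun x hx ↦ ?_⟩
  · rw [← hpos]
    congr 1
    ext x
    simpa using fun hx h0 ↦ absurd h0 hx.ne'
  · rw [← hneg]
    congr 1
    ext x
    simpa using fun hx h0 ↦ absurd h0 hx.ne
  · rcases eq_or_ne x 0 with rfl | h0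
    · simpa using hq
    · have hqx : q.eval x = 0 := by simpa [h0] using hx
      simpa [hqx, h0] using hsimple x hqx

section

variable {R : Type*} [CommRing R] [IsDomain R] [LinearOrder R]

lemma ncard_nonneg_roots_X_mul {q : R[X]} (hq : q.eval 0 ≠ 0) :
    {x | 0 ≤ x ∧ (X * q).eval x = 0}.ncard = {x | 0 < x ∧ q.eval x = 0}.ncard + 1 := by
  have hfin : {x | 0 < x ∧ q.eval x = 0}.Finite :=
    (q.finite_setOfPred_isRoot (by rintro rfl; simp at hq)).subset fun x hx ↦ hx.2
  rw [← ncard_insert_of_notMem (a := 0) (by simp) hfin]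
  congr 1
  ext x
  rcases eq_or_ne x 0 with rfl | h0
  · simp
  · simp [h0, lt_iff_le_and_ne, h0.symm]

lemma ncard_nonpos_roots_X_mul {q : R[X]} (hq : q.eval 0 ≠ 0) :
    {x | x ≤ 0 ∧ (X * q).eval x = 0}.ncard = {x | x < 0 ∧ q.eval x = 0}.ncard + 1 := by
  have hfin : {x | x < 0 ∧ q.eval x = 0}.Finite :=
    (q.finite_setOfPred_isRoot (by rintro rfl; simp at hq)).subset fun x hx ↦ hx.2
  rw [← ncard_insert_of_notMem (a := 0) (by simp) hfin]
  congr 1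
  ext x
  rcases eq_or_ne x 0 with rfl | h0
  · simp
  · simp [h0, lt_iff_le_and_ne]

end

/-! ### Large constant terms -/

section LargeConstant

section

variable {𝕜 : Type*} [NormedField 𝕜] [LinearOrder 𝕜] [IsStrictOrderedRing 𝕜] [OrderTopology 𝕜]
  {p : 𝕜[X]}

lemma tendsto_eval_atBot_of_even_natDegree (hdeg : Even p.natDegree) (h0 : 0 < p.natDegree)
    (hlead : 0 < p.leadingCoeff) : Tendsto (fun x ↦ p.eval x) atBot atTop := by
  have h : Tendsto (fun x ↦ (p.comp (-X)).eval x) atTop atTop := by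
    refine tendsto_atTop_of_leadingCoeff_nonneg _ ?_ ?_
    · rwa [degree_comp_neg_X, ← natDegree_pos_iff_degree_pos]
    · simpa [hdeg.neg_one_pow] using hlead.le
  simpa [Function.comp_def] using h.comp tendsto_neg_atBot_atTop

lemma tendsto_eval_atBot_of_odd_natDegree (hdeg : Odd p.natDegree) (hlead : 0 < p.leadingCoeff) :
    Tendsto (fun x ↦ p.eval x) atBot atBot := by
  have h : Tendsto (fun x ↦ (p.comp (-X)).eval x) atTop atBot := by
    refine tendsto_atBot_of_leadingCoeff_nonpos _ ?_ ?_
    · rw [degree_comp_neg_X, ← natDegree_pos_iff_degree_pos]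
      exact hdeg.pos
    · simpa [hdeg.neg_one_pow] using hlead.le
  simpa [Function.comp_def] using h.comp tendsto_neg_atBot_atTop

end

variable {p : ℝ[X]}

lemma exists_forall_le_eval_of_even_natDegree (hdeg : Even p.natDegree)
    (hlead : 0 < p.leadingCoeff) : ∃ m, ∀ x, m ≤ p.eval x := by
  rcases Nat.eq_zero_or_pos p.natDegree with h0 | h0
  · obtain ⟨a, rfl⟩ := natDegree_eq_zero.mp h0
    exact ⟨a, fun x ↦ by simp⟩
  · have hlim : Tendsto (fun x ↦ p.eval x) (cocompact ℝ) atTop := by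
      rw [cocompact_eq_atBot_atTop]
      exact (tendsto_eval_atBot_of_even_natDegree hdeg h0 hlead).sup
        (p.tendsto_atTop_of_leadingCoeff_nonneg (natDegree_pos_iff_degree_pos.mp h0) hlead.le)
    obtain ⟨x₀, hx₀⟩ := p.continuous.exists_forall_le hlim
    exact ⟨_, hx₀⟩

lemma exists_forall_Ici_le_eval (h0 : 0 < p.natDegree) (hlead : 0 < p.leadingCoeff) (a : ℝ) :
    ∃ m, ∀ x, a ≤ x → m ≤ p.eval x := by
  have hlim := p.tendsto_atTop_of_leadingCoeff_nonneg (natDegree_pos_iff_degree_pos.mp h0) hlead.le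
  obtain ⟨b, hb⟩ := eventually_atTop.mp (hlim.eventually_ge_atTop 0)
  obtain ⟨m, hm⟩ := isCompact_Icc.bddBelow_image (p.continuous.continuousOn (s := Icc a b))
  refine ⟨min m 0, fun x hx ↦ ?_⟩
  rcases le_total x b with hxb | hbx
  · exact (min_le_left _ _).trans (hm ⟨x, ⟨hx, hxb⟩, rfl⟩)
  · exact (min_le_right _ _).trans (hb x hbx)

lemma injOn_eval_of_derivative_ne_zero {s : Set ℝ} [s.OrdConnected]
    (h : ∀ x ∈ s, (derivative p).eval x ≠ 0) : InjOn (fun x ↦ p.eval x) s := by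
  intro x hx y hy hxy
  by_contra hne
  wlog hlt : x < y generalizing x y
  · exact this hy hx hxy.symm (Ne.symm hne) (lt_of_le_of_ne (not_lt.mp hlt) (Ne.symm hne))
  obtain ⟨z, hz, hz0⟩ := exists_hasDerivAt_eq_zero hlt p.continuous.continuousOn hxy
    fun z _ ↦ p.hasDerivAt z
  exact h z (‹s.OrdConnected›.out hx hy (Ioo_subset_Icc_self hz)) hz0

lemma eventually_countRoots_add_C_of_even_natDegree (hdeg : Even p.natDegree)
    (hlead : 0 < p.leadingCoeff) : ∀ᶠ c in atTop, CountRoots (p + C c) 0 0 := by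
  obtain ⟨m, hm⟩ := exists_forall_le_eval_of_even_natDegree hdeg hlead
  filter_upwards [eventually_gt_atTop (-m)] with c hc
  have hroot (x : ℝ) : (p + C c).eval x ≠ 0 := by
    rw [eval_add, eval_C]
    linarith [hm x]
  simp [CountRoots, hroot, -eval_add]

lemma eventually_countRoots_add_C_of_odd_natDegree (hdeg : Odd p.natDegree)
    (hlead : 0 < p.leadingCoeff) : ∀ᶠ c in atTop, CountRoots (p + C c) 0 1 := by
  have hder : derivative p ≠ 0 := fun h ↦ hdeg.pos.ne' (derivative_eq_zero.mp h)
  obtain ⟨a, ha0, ha⟩ : ∃ a < 0, ∀ x ≤ a, (derivative p).eval x ≠ 0 := by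
    obtain ⟨b, hb⟩ := eventually_atBot.mp (eventually_atBot_not_isRoot _ hder)
    exact ⟨min b (-1), by simp, fun x hx ↦ hb x (hx.trans (min_le_left _ _))⟩
  obtain ⟨m, hm⟩ := exists_forall_Ici_le_eval hdeg.pos hlead a
  filter_upwards [eventually_gt_atTop (-m)] with c hc
  have hlt {x : ℝ} (hx : (p + C c).eval x = 0) : x < a := by
    by_contra! h
    rw [eval_add, eval_C] at hx
    linarith [hm x h]
  obtain ⟨r, hr⟩ : ∃ r, (p + C c).eval r = 0 := by
    obtain ⟨b, hb⟩ := ((tendsto_eval_atBot_of_odd_natDegree hdeg hlead).eventually_le_atBot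
      (-c)).exists
    refine mem_range_of_exists_le_of_exists_ge (p + C c).continuous ⟨b, ?_⟩ ⟨a, ?_⟩
    · rw [eval_add, eval_C]
      linarith
    · rw [eval_add, eval_C]
      linarith [hm a le_rfl]
  have hinj : InjOn (fun x ↦ (p + C c).eval x) (Iic a) :=
    injOn_eval_of_derivative_ne_zero fun x hx ↦ by simpa using ha x hx
  refine ⟨?_, ncard_eq_one.mpr ⟨r, ?_⟩, fun x hx ↦ by simpa using ha x (hlt hx).le⟩
  · have hempty : {x : ℝ | 0 < x ∧ (p + C c).eval x = 0} = ∅ :=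
      eq_empty_of_forall_notMem fun x hx ↦ (hlt hx.2).not_gt (ha0.trans hx.1)
    rw [hempty, ncard_empty]
  · refine eq_singleton_iff_unique_mem.mpr ⟨⟨(hlt hr).trans ha0, hr⟩, fun x hx ↦ ?_⟩
    exact hinj (hlt hx.2).le (hlt hr).le (hx.2.trans hr.symm)

lemma eventually_countRoots_add_C_neg_of_odd_natDegree (hdeg : Odd p.natDegree)
    (hlead : 0 < p.leadingCoeff) : ∀ᶠ c in atTop, CountRoots (p + C (-c)) 1 0 := by
  have hmirror := eventually_countRoots_add_C_of_odd_natDegree (p := -p.comp (-X))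
    (by simpa [natDegree_comp] using hdeg) (by simpa [hdeg.neg_one_pow] using hlead)
  filter_upwards [hmirror] with c hc
  simpa [add_comm, comp_neg_X_comp_neg_X, sub_eq_add_neg] using hc.neg_comp_neg_X

end LargeConstant

/-! ### Small constant terms -/

section SmallConstant

lemma ncard_sep_eq_of_bijOn {α β : Type*} {f : α → β} {s : Set α} {t : Set β} (h : BijOn f s t)
    {P : α → Prop} {Q : β → Prop} (hPQ : ∀ x ∈ s, (Q (f x) ↔ P x)) :
    {y | Q y ∧ y ∈ t}.ncard = {x | P x ∧ x ∈ s}.ncard := by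
  refine (BijOn.ncard_eq (f := f) ⟨?_, h.injOn.mono fun x hx ↦ hx.2, ?_⟩).symm
  · exact fun x hx ↦ ⟨(hPQ x hx.2).mpr hx.1, h.mapsTo hx.2⟩
  · rintro y ⟨hQ, hy⟩
    obtain ⟨x, hx, rfl⟩ := h.surjOn hy
    exact ⟨x, ⟨(hPQ x hx).mp hQ, hx⟩, rfl⟩

lemma eventually_injOn_of_tendsto_nhds {α β : Type*} [TopologicalSpace α] [T2Space α] {s : Set α}
    (hs : s.Finite) {g : α → β → α} {l : Filter β} (hg : ∀ x ∈ s, Tendsto (g x) l (𝓝 x)) :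
    ∀ᶠ y in l, InjOn (g · y) s := by
  refine (hs.eventually_all).mpr fun x hx ↦ (hs.eventually_all).mpr fun x' hx' ↦ ?_
  by_cases hne : x = x'
  · exact .of_forall fun y _ ↦ hne
  · obtain ⟨U, V, hU, hV, hxU, hxV, hUV⟩ := t2_separation hne
    filter_upwards [hg x hx (hU.mem_nhds hxU), hg x' hx' (hV.mem_nhds hxV)] with y hy hy' h
    exact absurd h (hUV.ne_of_mem hy hy')

section Branches

variable {𝕜 : Type*} [NontriviallyNormedField 𝕜] {p : 𝕜[X]}

lemma exists_local_inverse_eval [CompleteSpace 𝕜] {r : 𝕜} (hr : (derivative p).eval r ≠ 0) :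
    ∃ g : 𝕜 → 𝕜, Tendsto g (𝓝 (p.eval r)) (𝓝 r) ∧ (∀ᶠ x in 𝓝 r, g (p.eval x) = x) ∧
      ∀ᶠ y in 𝓝 (p.eval r), p.eval (g y) = y := by
  have hd := p.hasStrictDerivAt r
  exact ⟨hd.localInverse _ _ _ hr, (hd.hasStrictFDerivAt_equiv hr).localInverse_tendsto,
    hd.eventually_left_inverse hr, hd.eventually_right_inverse hr⟩

lemma exists_root_branches [ProperSpace 𝕜]
    (hp : ∀ r, p.eval r = 0 → (derivative p).eval r ≠ 0) :
    ∃ g : 𝕜 → 𝕜 → 𝕜, (∀ r, p.eval r = 0 → Tendsto (g r) (𝓝 0) (𝓝 r)) ∧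
      ∀ᶠ y in 𝓝 0, BijOn (g · y) {r | p.eval r = 0} {x | p.eval x = y} ∧
        ∀ x, p.eval x = y → (derivative p).eval x ≠ 0 := by
  have hfin : {r | p.eval r = 0}.Finite :=
    p.finite_setOfPred_isRoot (by rintro rfl; simp at hp)
  have hbranch (r : 𝕜) : ∃ g : 𝕜 → 𝕜, p.eval r = 0 → Tendsto g (𝓝 0) (𝓝 r) ∧
      (∀ᶠ x in 𝓝 r, g (p.eval x) = x) ∧ ∀ᶠ y in 𝓝 0, p.eval (g y) = y := by
    by_cases hr : p.eval r = 0
    · obtain ⟨g, hg⟩ := exists_local_inverse_eval (hp r hr)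
      exact ⟨g, fun _ ↦ hr ▸ hg⟩
    · exact ⟨id, fun h ↦ absurd h hr⟩
  choose g hg using hbranch
  refine ⟨g, fun r hr ↦ (hg r hr).1, ?_⟩
  have hinj : ∀ᶠ y in 𝓝 0, InjOn (g · y) {r | p.eval r = 0} :=
    eventually_injOn_of_tendsto_nhds hfin fun r hr ↦ (hg r hr).1
  have hmaps : ∀ᶠ y in 𝓝 0, MapsTo (g · y) {r | p.eval r = 0} {x | p.eval x = y} :=
    (hfin.eventually_all).mpr fun r hr ↦ (hg r hr).2.2
  -- `p.eval` is a closed map, so all solutions of `p x = y` with `y` small lie near a root of `p`.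
  have hnear : ∀ᶠ y in 𝓝 0, ∀ x, p.eval x = y →
      (∃ r, p.eval r = 0 ∧ g r (p.eval x) = x) ∧ (derivative p).eval x ≠ 0 := by
    refine eventually_comap.mp (p.isClosedMap_eval.comap_nhds_le ?_)
    refine eventually_nhdsSet_iff_forall.mpr fun r hr ↦ ?_
    filter_upwards [(hg r hr).2.1,
      (derivative p).continuous.continuousAt.eventually_ne (hp r hr)] with x hx hx'
    exact ⟨⟨r, hr, hx⟩, hx'⟩
  filter_upwards [hinj, hmaps, hnear] with y hinj hmaps hnear
  refine ⟨⟨hmaps, hinj, fun x hx ↦ ?_⟩, fun x hx ↦ (hnear x hx).2⟩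
  obtain ⟨⟨r, hr, hrx⟩, -⟩ := hnear x hx
  exact ⟨r, hr, by rwa [← show p.eval x = y from hx]⟩

end Branches

variable {q : ℝ[X]}

lemma exists_bijOn_roots_X_mul_add_C (hsimple : ∀ x, q.eval x = 0 → (derivative q).eval x ≠ 0)
    (hq : q.eval 0 ≠ 0) :
    ∀ᶠ c in 𝓝 0, (∀ x, (X * q + C c).eval x = 0 → (derivative (X * q + C c)).eval x ≠ 0) ∧
      ∃ φ : ℝ → ℝ, BijOn φ {r | (X * q).eval r = 0} {x | (X * q + C c).eval x = 0} ∧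
        (∀ r, q.eval r = 0 → (0 < φ r ↔ 0 < r) ∧ (φ r < 0 ↔ r < 0)) ∧
        (0 < q.eval 0 * c → φ 0 < 0) ∧ (q.eval 0 * c < 0 → 0 < φ 0) := by
  obtain ⟨g, hg, hbij⟩ := exists_root_branches
    (CountRoots.X_mul (q := q) ⟨rfl, rfl, hsimple⟩ hq).2.2
  have hfin : {r | q.eval r = 0}.Finite :=
    q.finite_setOfPred_isRoot (by rintro rfl; simp at hq)
  have hsign : ∀ᶠ y in 𝓝 0, ∀ r ∈ {r | q.eval r = 0},
      (0 < g r y ↔ 0 < r) ∧ (g r y < 0 ↔ r < 0) := by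
    refine (hfin.eventually_all).mpr fun r hr ↦ ?_
    have hr0 : r ≠ 0 := by rintro rfl; exact hq hr
    have hgr := hg r (by simp [show q.eval r = 0 from hr])
    rcases hr0.lt_or_gt with h | h
    · filter_upwards [hgr.eventually_lt_const h] with y hy
      exact ⟨iff_of_false hy.not_gt h.not_gt, iff_of_true hy h⟩
    · filter_upwards [hgr.eventually_const_lt h] with y hy
      exact ⟨iff_of_true hy h, iff_of_false hy.not_gt h.not_gt⟩
  have hzero : ∀ᶠ y in 𝓝 0, 0 < q.eval (g 0 y) * q.eval 0 := by
    have hlim : Tendsto (fun y ↦ q.eval (g 0 y) * q.eval 0) (𝓝 0) (𝓝 (q.eval 0 * q.eval 0)) :=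
      ((q.continuous.tendsto 0).comp (hg 0 (by simp))).mul_const _
    exact hlim.eventually_const_lt (mul_self_pos.mpr hq)
  have hneg : Tendsto (fun c : ℝ ↦ -c) (𝓝 0) (𝓝 0) := by
    simpa using (continuous_neg (G := ℝ)).tendsto 0
  filter_upwards [hneg.eventually (hbij.and (hsign.and hzero))] with c ⟨⟨hbij, hder⟩, hsign, hzero⟩
  have hiff (x : ℝ) : (X * q + C c).eval x = 0 ↔ (X * q).eval x = -c := by
    rw [eval_add, eval_C, add_eq_zero_iff_eq_neg]
  simp only [hiff]
  refine ⟨fun x hx ↦ by simpa using hder x hx, (g · (-c)), hbij, hsign, ?_⟩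
  have hroot : g 0 (-c) * q.eval (g 0 (-c)) = -c := by
    have h0 : (X * q).eval 0 = 0 := by simp
    simpa using hbij.mapsTo h0
  have hprod : q.eval 0 * c = -(g 0 (-c) * (q.eval (g 0 (-c)) * q.eval 0)) := by
    linear_combination q.eval 0 * hroot
  rw [hprod]
  exact ⟨fun h ↦ by_contra fun h' ↦ by nlinarith, fun h ↦ by_contra fun h' ↦ by nlinarith⟩

lemma CountRoots.eventually_X_mul_add_C {a b : ℕ} (h : CountRoots q a b) (hq : q.eval 0 ≠ 0) :
    ∀ᶠ c in 𝓝 0, (0 < q.eval 0 * c → CountRoots (X * q + C c) a (b + 1)) ∧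
      (q.eval 0 * c < 0 → CountRoots (X * q + C c) (a + 1) b) := by
  obtain ⟨hX_pos, hX_neg, -⟩ := h.X_mul hq
  have hnonneg := ncard_nonneg_roots_X_mul hq
  have hnonpos := ncard_nonpos_roots_X_mul hq
  rw [h.1] at hnonneg
  rw [h.2.1] at hnonpos
  filter_upwards [exists_bijOn_roots_X_mul_add_C h.2.2 hq] with
    c ⟨hsimple, φ, hφ, hsign, hleft, hright⟩
  have hroot {r : ℝ} (hr : (X * q).eval r = 0) : r = 0 ∨ q.eval r = 0 := by simpa using hr
  refine ⟨fun hc ↦ ⟨?_, ?_, hsimple⟩, fun hc ↦ ⟨?_, ?_, hsimple⟩⟩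
  · rw [← hX_pos]
    refine ncard_sep_eq_of_bijOn hφ fun r hr ↦ ?_
    rcases hroot hr with rfl | hr
    · simp [(hleft hc).le]
    · exact (hsign r hr).1
  · rw [← hnonpos]
    refine ncard_sep_eq_of_bijOn hφ fun r hr ↦ ?_
    rcases hroot hr with rfl | hr
    · simp [hleft hc]
    · grind
  · rw [← hnonneg]
    refine ncard_sep_eq_of_bijOn hφ fun r hr ↦ ?_
    rcases hroot hr with rfl | hr
    · simp [hright hc]
    · grind
  · rw [← hX_neg]
    refine ncard_sep_eq_of_bijOn hφ fun r hr ↦ ?_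
    rcases hroot hr with rfl | hr
    · simp [(hright hc).le]
    · exact (hsign r hr).2

end SmallConstant

/-! ### Appending a constant term -/

/-- The pair `x` of root counts can be reached from the pair `y` of the derivative by an extreme
choice of the constant term: a large one if `x` counts at most one root, and a small one if `x`
counts one root more than `y`. -/
def IsExtremeStep (y x : ℕ × ℕ) : Prop :=
  x.1 ≤ y.1 + 1 ∧ x.2 ≤ y.2 + 1 ∧ Odd (x.1 + x.2 + (y.1 + y.2)) ∧
    (x.1 + x.2 ≤ 1 ∨ x.1 + x.2 = y.1 + y.2 + 1)

/-- A polynomial with the root counts `x = (pos, neg)`, together with the properties needed to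
append further constant terms to it: the nonreal roots come in pairs, and the sign of `p` at `0` is
the one forced by the number of positive roots. -/
structure HasProfile (p : ℝ[X]) (x : ℕ × ℕ) : Prop where
  leadingCoeff_pos : 0 < p.leadingCoeff
  even_natDegree_add : Even (p.natDegree + (x.1 + x.2))
  countRoots : CountRoots p x.1 x.2
  eval_zero_pos : 0 < (-1) ^ x.1 * p.eval 0

lemma hasProfile_C {a : ℝ} (ha : 0 < a) : HasProfile (C a) (0, 0) where
  leadingCoeff_pos := by simpa
  even_natDegree_add := by simp
  countRoots := by simp [CountRoots, ha.ne']
  eval_zero_pos := by simpa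

lemma natDegree_X_mul_add_C {R : Type*} [Semiring R] {q : R[X]} (hq : q ≠ 0) (c : R) :
    (X * q + C c).natDegree = q.natDegree + 1 := by
  have : Nontrivial R := nontrivial_of_ne _ _ (leadingCoeff_ne_zero.mpr hq)
  rw [natDegree_add_C, natDegree_X_mul hq]

lemma leadingCoeff_X_mul_add_C {R : Type*} [Semiring R] {q : R[X]} (hq : q ≠ 0) (c : R) :
    (X * q + C c).leadingCoeff = q.leadingCoeff := by
  rw [leadingCoeff, natDegree_X_mul_add_C hq, coeff_add, coeff_X_mul, coeff_C_succ, add_zero,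
    leadingCoeff]

namespace HasProfile

variable {q : ℝ[X]} {x y : ℕ × ℕ}

lemma ne_zero (h : HasProfile q y) : q ≠ 0 :=
  leadingCoeff_ne_zero.mp h.leadingCoeff_pos.ne'

lemma eval_zero_ne_zero (h : HasProfile q y) : q.eval 0 ≠ 0 := fun h0 ↦ by
  simpa [h0] using h.eval_zero_pos

lemma X_mul_add_C (h : HasProfile q y) (hxy : IsExtremeStep y x) {t : ℝ} (ht : 0 < t)
    (hcount : CountRoots (X * q + C ((-1) ^ x.1 * t)) x.1 x.2) :
    HasProfile (X * q + C ((-1) ^ x.1 * t)) x where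
  leadingCoeff_pos := by
    rw [leadingCoeff_X_mul_add_C h.ne_zero]
    exact h.leadingCoeff_pos
  even_natDegree_add := by
    rw [natDegree_X_mul_add_C h.ne_zero]
    have := h.even_natDegree_add
    have := hxy.2.2.1
    grind
  countRoots := hcount
  eval_zero_pos := by simpa [← mul_assoc, ← mul_pow] using ht

lemma eventually_atTop_X_mul_add_C (h : HasProfile q y) (hxy : IsExtremeStep y x)
    (hx : x.1 + x.2 ≤ 1) : ∀ᶠ t in atTop, HasProfile (X * q + C ((-1) ^ x.1 * t)) x := by
  have hlead : 0 < (X * q).leadingCoeff := by simpa using h.leadingCoeff_pos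
  have hparity : Even ((X * q).natDegree + (x.1 + x.2)) := by
    rw [natDegree_X_mul h.ne_zero]
    have := h.even_natDegree_add
    have := hxy.2.2.1
    grind
  suffices hcount : ∀ᶠ t in atTop, CountRoots (X * q + C ((-1) ^ x.1 * t)) x.1 x.2 by
    filter_upwards [hcount, eventually_gt_atTop 0] with t hcount ht
    exact h.X_mul_add_C hxy ht hcount
  obtain ⟨a, b⟩ := x
  obtain ⟨rfl, rfl⟩ | ⟨rfl, rfl⟩ | ⟨rfl, rfl⟩ :
      a = 0 ∧ b = 0 ∨ a = 0 ∧ b = 1 ∨ a = 1 ∧ b = 0 := by grind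
  · simpa using eventually_countRoots_add_C_of_even_natDegree (by simpa using hparity) hlead
  · simpa using eventually_countRoots_add_C_of_odd_natDegree (by grind) hlead
  · simpa using eventually_countRoots_add_C_neg_of_odd_natDegree (by grind) hlead

lemma eventually_nhdsGT_X_mul_add_C (h : HasProfile q y) (hxy : IsExtremeStep y x)
    (hx : x.1 + x.2 = y.1 + y.2 + 1) :
    ∀ᶠ t in 𝓝[>] 0, HasProfile (X * q + C ((-1) ^ x.1 * t)) x := by
  have hlim : Tendsto (fun t : ℝ ↦ (-1) ^ x.1 * t) (𝓝[>] 0) (𝓝 0) := by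
    simpa using ((continuous_const_mul ((-1 : ℝ) ^ x.1)).tendsto 0).mono_left nhdsWithin_le_nhds
  filter_upwards [hlim.eventually (h.countRoots.eventually_X_mul_add_C h.eval_zero_ne_zero),
    self_mem_nhdsWithin] with t ⟨hleft, hright⟩ (ht : 0 < t)
  refine h.X_mul_add_C hxy ht ?_
  have hsign : 0 < (-1) ^ y.1 * q.eval 0 * t := mul_pos h.eval_zero_pos ht
  obtain ⟨h1, h2⟩ | ⟨h1, h2⟩ : x.1 = y.1 ∧ x.2 = y.2 + 1 ∨ x.1 = y.1 + 1 ∧ x.2 = y.2 := by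
    grind [IsExtremeStep]
  · rw [h1, h2]
    rw [h1] at hleft
    exact hleft (by linarith)
  · rw [h1] at hright
    rw [h1, h2]
    exact hright (by rw [pow_succ]; linarith)

end HasProfile

lemma IsExtremeStep.exists_filter {x y : ℕ × ℕ} (hxy : IsExtremeStep y x) :
    ∃ l : Filter ℝ, l.NeBot ∧ ∀ q, HasProfile q y → ∀ w > 0,
      ∀ᶠ t in l, HasProfile (X * q + C (w * ((-1) ^ x.1 * t))) x := by
  simp only [mul_left_comm _ ((-1 : ℝ) ^ _)]
  rcases hxy.2.2.2 with hx | hx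
  · refine ⟨atTop, inferInstance, fun q hq w hw ↦ ?_⟩
    exact (tendsto_id.const_mul_atTop hw).eventually (hq.eventually_atTop_X_mul_add_C hxy hx)
  · refine ⟨𝓝[>] 0, inferInstance, fun q hq w hw ↦ ?_⟩
    have hlim : Tendsto (fun t : ℝ ↦ w * t) (𝓝[>] 0) (𝓝[>] 0) := by
      refine tendsto_nhdsWithin_iff.mpr ⟨?_, ?_⟩
      · simpa using ((continuous_const_mul w).tendsto 0).mono_left nhdsWithin_le_nhds
      · filter_upwards [self_mem_nhdsWithin] with t ht using mul_pos hw ht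
    exact hlim.eventually (hq.eventually_nhdsGT_X_mul_add_C hxy hx)

/-! ### Polynomials with prescribed coefficients -/

section Coefficients

/-- The polynomial `b 0 + b 1 * X + ⋯ + b n * X ^ n`. Coefficients are given by a sequence so that
passing to the tail `b (· + k)` and multiplying by weights are operations on sequences. -/
noncomputable def polyOfCoeffs {R : Type*} [Semiring R] (b : ℕ → R) (n : ℕ) : R[X] :=
  ∑ i ∈ Finset.range (n + 1), monomial i (b i)

variable {R : Type*} [Semiring R] (b : ℕ → R) (n : ℕ)

lemma coeff_polyOfCoeffs (i : ℕ) : (polyOfCoeffs b n).coeff i = if i ≤ n then b i else 0 := by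
  simp [polyOfCoeffs, coeff_monomial]

lemma polyOfCoeffs_zero : polyOfCoeffs b 0 = C (b 0) := by
  simp [polyOfCoeffs]

lemma polyOfCoeffs_succ :
    polyOfCoeffs b (n + 1) = X * polyOfCoeffs (fun i ↦ b (i + 1)) n + C (b 0) := by
  ext (_ | i) <;> simp [coeff_polyOfCoeffs]

lemma natDegree_polyOfCoeffs {b : ℕ → R} {n : ℕ} (hb : b n ≠ 0) :
    (polyOfCoeffs b n).natDegree = n := by
  refine natDegree_eq_of_le_of_coeff_ne_zero ?_ (by simpa [coeff_polyOfCoeffs] using hb)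
  refine natDegree_le_iff_coeff_eq_zero.mpr fun i hi ↦ ?_
  rw [coeff_polyOfCoeffs, if_neg hi.not_ge]

lemma iterate_derivative_polyOfCoeffs (k : ℕ) (hk : k ≤ n) :
    derivative^[k] (polyOfCoeffs b n) =
      polyOfCoeffs (fun i ↦ (i + k).descFactorial k * b (i + k)) (n - k) := by
  ext i
  simp [coeff_iterate_derivative, coeff_polyOfCoeffs, Nat.le_sub_iff_add_le hk]

end Coefficients

lemma iterDeriv_eq_iterate (k : ℕ) (P : ℝ[X]) : iterDeriv k P = derivative^[k] P := by
  induction k with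
  | zero => rfl
  | succ k ih => rw [iterDeriv, ih, Function.iterate_succ_apply']

/-! ### Realization -/

-- Each derivative of a polynomial has its coefficients multiplied by positive weights of its own;
-- hence one weight sequence `w m` per derivative.
lemma exists_coeffs_hasProfile {ι : Type*} [Finite ι] (d : ℕ) (x : ℕ → ℕ × ℕ) (w : ι → ℕ → ℝ)
    (hw : ∀ m i, 0 < w m i) (hx : ∀ k < d, IsExtremeStep (x (k + 1)) (x k)) (hxd : x d = (0, 0)) :
    ∃ a : ℕ → ℝ, a d = 1 ∧ ∀ m, ∀ k ≤ d,
      HasProfile (polyOfCoeffs (fun i ↦ w m (i + k) * a (i + k)) (d - k)) (x k) := by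
  induction d generalizing x w with
  | zero =>
    refine ⟨fun _ ↦ 1, rfl, fun m k hk ↦ ?_⟩
    obtain rfl : k = 0 := by omega
    simpa [polyOfCoeffs_zero, hxd] using hasProfile_C (hw m 0)
  | succ d ih =>
    obtain ⟨a, had, ha⟩ := ih (fun k ↦ x (k + 1)) (fun m i ↦ w m (i + 1)) (fun m i ↦ hw m (i + 1))
      (fun k hk ↦ hx (k + 1) (by omega)) hxd
    obtain ⟨l, hl, hstep⟩ := (hx 0 d.succ_pos).exists_filter
    obtain ⟨t, ht⟩ := (eventually_all.mpr fun m ↦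
      hstep _ (ha m 0 d.zero_le) (w m 0) (hw m 0)).exists
    refine ⟨fun i ↦ i.casesOn ((-1) ^ (x 0).1 * t) a, had, fun m k hk ↦ ?_⟩
    cases k with
    | zero => simpa [polyOfCoeffs_succ] using ht m
    | succ k => simpa [← add_assoc] using ha m k (by omega)

lemma exists_coeffs_hasProfile_iterDeriv (d : ℕ) (x : ℕ → ℕ × ℕ)
    (hx : ∀ k < d, IsExtremeStep (x (k + 1)) (x k)) (hxd : x d = (0, 0)) :
    ∃ a : ℕ → ℝ, a d = 1 ∧ ∀ k ≤ d, HasProfile (iterDeriv k (polyOfCoeffs a d)) (x k) := by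
  -- For `m ≤ i`, this is the weight of `a i` in the `m`-th derivative; `max` keeps it positive for
  -- the other `i`, which do not occur there.
  let w (m : Fin (d + 1)) (i : ℕ) : ℝ := (max i m).descFactorial m
  have hw (m : Fin (d + 1)) (i : ℕ) : 0 < w m i :=
    Nat.cast_pos.mpr <| Nat.descFactorial_pos.mpr (le_max_right _ _)
  obtain ⟨a, had, ha⟩ := exists_coeffs_hasProfile d x w hw hx hxd
  refine ⟨a, had, fun k hk ↦ ?_⟩
  rw [iterDeriv_eq_iterate, iterate_derivative_polyOfCoeffs _ _ _ hk]
  simpa [w] using ha ⟨k, by omega⟩ k hk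

section SignPattern

variable {d : ℕ} {s : ℕ → ℤ} {pn : ℕ → ℕ × ℕ}

lemma IsSignPattern.signChanges_add_signPres {n : ℕ} (hs : IsSignPattern d s) (hn : n ≤ d) :
    signChanges s n + signPres s n = n := by
  have hpres : signPres s n =
      ((Finset.range n).filter fun i ↦ ¬ s i * s (i + 1) < 0).card := by
    refine congrArg Finset.card (Finset.filter_congr fun i hi ↦ ?_)
    rw [Finset.mem_range] at hi
    rcases hs.2 i (by omega) with h | h <;> rcases hs.2 (i + 1) (by omega) with h' | h' <;>
      simp [h, h']
  rw [hpres, signChanges, Finset.card_filter_add_card_filter_not, Finset.card_range]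

lemma IsSAP.add_le_and_even (hpn : IsSAP d s pn) (hs : IsSignPattern d s) {k : ℕ} (hk : k < d) :
    (pn k).1 + (pn k).2 ≤ d - k ∧ Even (d - k + ((pn k).1 + (pn k).2)) := by
  obtain ⟨hpos, hpos_even, hneg, hneg_even, -⟩ := hpn.1 k hk
  have hsum := hs.signChanges_add_signPres (Nat.sub_le d k)
  grind

-- `IsSAP` says nothing about `pn d`, whereas the `d`-th derivative is a constant without roots.
lemma IsSAP.isExtremeStep (hpn : IsSAP d s pn) (hs : IsSignPattern d s)
    (hstep : ∀ k, k + 1 < d → (pn k).1 + (pn k).2 ≤ 1 ∨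
      (pn k).1 + (pn k).2 = (pn (k + 1)).1 + (pn (k + 1)).2 + 1)
    {k : ℕ} (hk : k < d) :
    IsExtremeStep (Function.update pn d (0, 0) (k + 1)) (Function.update pn d (0, 0) k) := by
  obtain ⟨hle, heven⟩ := hpn.add_le_and_even hs hk
  rw [Function.update_of_ne hk.ne]
  rcases (Nat.succ_le_of_lt hk).eq_or_lt with rfl | hk'
  · rw [Function.update_self]
    grind [IsExtremeStep]
  · rw [Function.update_of_ne hk'.ne]
    obtain ⟨hpos, hneg, -, -⟩ := hpn.2 k hk'
    have heven' := (hpn.add_le_and_even hs hk').2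
    have hodd : Odd ((pn k).1 + (pn k).2 + ((pn (k + 1)).1 + (pn (k + 1)).2)) := by grind
    exact ⟨hpos, hneg, hodd, hstep k hk'⟩

lemma IsSAP.mul_coeff_pos (hpn : IsSAP d s pn) (hs : IsSignPattern d s) {P : ℝ[X]}
    (hlead : 0 < P.coeff d) (hP : ∀ k < d, HasProfile (iterDeriv k P) (pn k)) {i : ℕ} (hi : i ≤ d) :
    0 < (s i : ℝ) * P.coeff (d - i) := by
  rcases Nat.eq_zero_or_pos i with rfl | hpos
  · simpa [hs.1] using hlead
  · have hk : d - i < d := by omega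
    have hsign : s i = (-1) ^ (pn (d - i)).1 := by
      simpa [Nat.sub_sub_self hi] using (hpn.1 (d - i) hk).2.2.2.2
    have heval := (hP (d - i) hk).eval_zero_pos
    rw [iterDeriv_eq_iterate, ← coeff_zero_eq_eval_zero, coeff_iterate_derivative, nsmul_eq_mul,
      zero_add, mul_left_comm] at heval
    simpa [hsign] using pos_of_mul_pos_right heval (Nat.cast_nonneg _)

end SignPattern

theorem stmt3_general {d : ℕ} {s : ℕ → ℤ} {pn : ℕ → ℕ × ℕ} (hs : IsSignPattern d s)
    (hpn : IsSAP d s pn)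
    (hstep : ∀ k, k + 1 < d → (pn k).1 + (pn k).2 ≤ 1 ∨
      (pn k).1 + (pn k).2 = (pn (k + 1)).1 + (pn (k + 1)).2 + 1) :
    Realizable d s pn := by
  obtain ⟨a, had, ha⟩ := exists_coeffs_hasProfile_iterDeriv d (Function.update pn d (0, 0))
    (fun k hk ↦ hpn.isExtremeStep hs hstep hk) (Function.update_self ..)
  set P := polyOfCoeffs a d
  have hlead : P.coeff d = 1 := by simp [P, coeff_polyOfCoeffs, had]
  have hdeg : P.natDegree = d := natDegree_polyOfCoeffs (by simp [had])
  have hP : ∀ k < d, HasProfile (iterDeriv k P) (pn k) := fun k hk ↦ by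
    simpa [Function.update_of_ne hk.ne] using ha k hk.le
  have hsign : ∀ i ≤ d, 0 < (s i : ℝ) * P.coeff (d - i) := fun i hi ↦
    hpn.mul_coeff_pos hs (by simp [hlead]) hP hi
  refine ⟨P, by rwa [Monic, leadingCoeff, hdeg], hdeg, fun j hj ↦ ?_, hsign,
    fun k hk ↦ (hP k hk).countRoots⟩
  simpa [Nat.sub_sub_self hj] using right_ne_zero_of_mul (hsign (d - j) (Nat.sub_le d j)).ne'

lemma IsSAP.add_le_one_or_eq_of_five {s : ℕ → ℤ} {pn : ℕ → ℕ × ℕ} (hpn : IsSAP 5 s pn)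
    (hs : IsSignPattern 5 s) (h2 : (pn 2).1 + (pn 2).2 = 1) {k : ℕ} (hk : k + 1 < 5) :
    (pn k).1 + (pn k).2 ≤ 1 ∨ (pn k).1 + (pn k).2 = (pn (k + 1)).1 + (pn (k + 1)).2 + 1 := by
  have hk_parity := (hpn.add_le_and_even hs (show k < 5 by omega)).2
  have hle := (hpn.2 k hk).2.2.1
  obtain rfl | rfl | rfl | rfl : k = 0 ∨ k = 1 ∨ k = 2 ∨ k = 3 := by omega
  · have h1 := (hpn.2 1 (by norm_num)).2.2.1
    grind
  · grind
  · exact .inl h2.le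
  · have h4 := (hpn.add_le_and_even hs (show 4 < 5 by norm_num)).1
    grind

/-- For `d = 5`, every SAP with `(pos_2, neg_2) = (0,1)` or `(1,0)` is realizable
(with the sign pattern it determines). -/
theorem stmt3 (s : ℕ → ℤ) (hs : IsSignPattern 5 s) (pn : ℕ → ℕ × ℕ)
    (hpn : IsSAP 5 s pn) (h2 : pn 2 = (0, 1) ∨ pn 2 = (1, 0)) :
    Realizable 5 s pn :=
  stmt3_general hs hpn fun _ ↦
    hpn.add_le_one_or_eq_of_five hs (by rcases h2 with h | h <;> simp [h])
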